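/- Let n ≥ 2, let M be a closed connected topological n-manifold, and let f : M → M be a regular homeomorphism whose chain recurrent set consists of exactly two points: a fixed point α of Morse index n (a source) and a fixed point ω of Morse index 0 (a sink). Then M is homeomorphic to the n-sphere Sⁿ. -/

import Mathlib

open Filter Topology

/-- `M` is a topological `n`-manifold without boundary: every point has an open
neighbourhood homeomorphic to `ℝⁿ`. -/
def IsChartedEuclidean (n : ℕ) (M : Type*) [TopologicalSpace M] : Prop :=
  ∀ x : M, ∃ U : Set M, IsOpen U ∧ x ∈ U ∧ Nonempty (U ≃ₜ EuclideanSpace ℝ (Fin n))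

/-- An `ε`-chain of the map `f` from `x` to `y`. -/
def IsEpsChain {M : Type*} [PseudoMetricSpace M] (f : M → M) (ε : ℝ) (x y : M) : Prop :=
  ∃ k : ℕ, 0 < k ∧ ∃ (c : Fin (k + 1) → M) (m : Fin k → ℕ),
    c 0 = x ∧ c (Fin.last k) = y ∧ (∀ i, 1 ≤ m i) ∧
    ∀ i : Fin k, dist (f^[m i] (c i.castSucc)) (c i.succ) < ε

/-- A point is chain recurrent for `f` if for every `ε > 0` there is an `ε`-chain
from the point to itself. -/
def ChainRecurrent {M : Type*} [PseudoMetricSpace M] (f : M → M) (x : M) : Prop :=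
  ∀ ε : ℝ, 0 < ε → IsEpsChain f ε x x

/-- The chain recurrent set of `f`. -/
def chainRecurrentSet {M : Type*} [PseudoMetricSpace M] (f : M → M) : Set M :=
  {x | ChainRecurrent f x}

/-- The canonical hyperbolic model map `a_{i,δu,δs} : ℝⁿ → ℝⁿ`,
`a(x₁,…,xₙ) = (2δu·x₁, 2x₂, …, 2x_i, (δs/2)·x_{i+1}, x_{i+2}/2, …, xₙ/2)`. -/
noncomputable def modelMap (n i : ℕ) (δu δs : ℝ) :
    EuclideanSpace ℝ (Fin n) → EuclideanSpace ℝ (Fin n) :=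
  fun x => WithLp.toLp 2 fun j : Fin n =>
    if (j : ℕ) < i then (if (j : ℕ) = 0 then 2 * δu else 2) * x j
    else (if (j : ℕ) = i then δs / 2 else 1 / 2) * x j

/-- A point `p` is a topologically hyperbolic periodic point of the homeomorphism `f`
with Morse index `i`: `p` is periodic of some least period `m` and `f^m` is conjugate,
in a neighbourhood of `p`, to the model map `a_{i,δu,δs}` on `ℝⁿ`. -/
def TopHyperbolic {M : Type*} [MetricSpace M] (n : ℕ) (f : M ≃ₜ M) (p : M) (i : ℕ) : Prop :=
  ∃ m : ℕ, 0 < m ∧ Function.IsPeriodicPt (⇑f) m p ∧ Function.minimalPeriod (⇑f) p = m ∧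
    ∃ δu δs : ℝ, (δu = 1 ∨ δu = -1) ∧ (δs = 1 ∨ δs = -1) ∧
      ∃ (U : Set M) (_ : IsOpen U) (_ : p ∈ U) (h : U ≃ₜ EuclideanSpace ℝ (Fin n)),
        ∀ x : U, (⇑f)^[m] (x : M) = ((h.symm (modelMap n i δu δs (h x)) : U) : M)

/-- A homeomorphism is regular if its chain recurrent set is finite and consists of
topologically hyperbolic periodic points (of some Morse index `i ∈ {0,…,n}`). -/
def RegularHomeo {M : Type*} [MetricSpace M] (n : ℕ) (f : M ≃ₜ M) : Prop :=
  (chainRecurrentSet (⇑f)).Finite ∧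
    ∀ p ∈ chainRecurrentSet (⇑f), ∃ i ≤ n, TopHyperbolic n f p i

/-- The stable manifold `W^s_p = {q : f^{km}(q) → p, k → +∞}`, `m` the least period. -/
def stableSet {M : Type*} [MetricSpace M] (f : M ≃ₜ M) (p : M) : Set M :=
  {q | Tendsto (fun k : ℕ => (⇑f)^[k * Function.minimalPeriod (⇑f) p] q) atTop (𝓝 p)}

/-- The unstable manifold `W^u_p = {q : f^{-km}(q) → p, k → +∞}`, `m` the least period. -/
def unstableSet {M : Type*} [MetricSpace M] (f : M ≃ₜ M) (p : M) : Set M :=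
  {q | Tendsto (fun k : ℕ => (⇑f.symm)^[k * Function.minimalPeriod (⇑f) p] q) atTop (𝓝 p)}

/-- A saddle periodic point: topologically hyperbolic of Morse index `0 < i < n`. -/
def IsSaddlePt {M : Type*} [MetricSpace M] (n : ℕ) (f : M ≃ₜ M) (p : M) : Prop :=
  ∃ i, 0 < i ∧ i < n ∧ TopHyperbolic n f p i

/-- A subset `S ⊆ M` is a locally flat `k`-dimensional submanifold of the `n`-manifold
`M`: every `x ∈ S` has an open neighbourhood `U` and a homeomorphism `ψ : U ≃ₜ ℝⁿ` with
`ψ(U ∩ S) = ℝᵏ × {0}`. -/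
def IsLocallyFlatSubmanifold (n k : ℕ) {M : Type*} [TopologicalSpace M] (S : Set M) : Prop :=
  ∀ x ∈ S, ∃ U : Set M, IsOpen U ∧ x ∈ U ∧
    ∃ ψ : U ≃ₜ EuclideanSpace ℝ (Fin n),
      ψ '' {y : U | (y : M) ∈ S} = {y | ∀ j : Fin n, k ≤ (j : ℕ) → y j = 0}

/-!
Let `F = f^m`, where `m` is the period of `ω`. The linearizing chart of `ω` identifies its domain
`U` with all of `ℝⁿ`, and the model map is onto, so `U` is invariant under `F` and `F⁻¹`. The
forward and the backward `F`-orbit of a point `x` of the compact set `Uᶜ` both accumulate at chain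
recurrent points of `Uᶜ`, and `α` is the only candidate. Following the forward orbit of `x` until
it is close to `α` and jumping from there onto the backward orbit closes up a chain, so `x` is
itself chain recurrent and `x = α`. Thus `Uᶜ ⊆ {α}`; equality holds because `U ≅ ℝⁿ` cannot be a
compact space with more than one point. Hence `M` is the one-point compactification of `ℝⁿ`,
which is `Sⁿ`.
-/

section ChainRecurrence

variable {X : Type*}

/-- `x` is a nonwandering point of `f`: every neighbourhood of `x` contains a point
that returns to it at some positive time. The notion is invariant under `f ↦ f⁻¹`, so it treats
forward and backward limit points of orbits alike. -/
def IsNonwandering [TopologicalSpace X] (f : X → X) (x : X) : Prop :=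
  ∀ W ∈ 𝓝 x, ∃ z ∈ W, ∃ m : ℕ, 0 < m ∧ f^[m] z ∈ W

lemma isNonwandering_of_mapClusterPt_iterate [TopologicalSpace X] {f : X → X} {x y : X}
    (hy : MapClusterPt y atTop (fun k : ℕ => f^[k] x)) : IsNonwandering f y := by
  intro W hW
  obtain ⟨k, hk⟩ := (hy.frequently hW).exists
  obtain ⟨l, hkl, hl⟩ := frequently_atTop.1 (hy.frequently hW) (k + 1)
  refine ⟨f^[k] x, hk, l - k, by lia, ?_⟩
  rwa [← Function.iterate_add_apply, Nat.sub_add_cancel (by lia)]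

lemma IsNonwandering.of_leftInverse [TopologicalSpace X] {f g : X → X} {x : X}
    (hx : IsNonwandering g x) (hfg : Function.LeftInverse f g) : IsNonwandering f x := by
  intro W hW
  obtain ⟨z, hz, m, hm, hgz⟩ := hx W hW
  exact ⟨g^[m] z, hgz, m, hm, by rwa [hfg.iterate m z]⟩

variable [PseudoMetricSpace X] {f g : X → X} {ε : ℝ} {x y z : X} {m m' : ℕ}

lemma isEpsChain_of_dist_iterate_lt (hm : 0 < m) (hxy : dist (f^[m] x) y < ε) :
    IsEpsChain f ε x y :=
  ⟨1, one_pos, ![x, y], ![m], rfl, rfl, by simpa using Nat.succ_le_of_lt hm, by simpa using hxy⟩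

lemma isEpsChain_of_dist_iterate_lt_of_dist_iterate_lt
    (hm : 0 < m) (hxy : dist (f^[m] x) y < ε) (hm' : 0 < m') (hyz : dist (f^[m'] y) z < ε) :
    IsEpsChain f ε x z := by
  refine ⟨2, two_pos, ![x, y, z], ![m, m'], rfl, rfl, ?_, ?_⟩
  · simpa [Fin.forall_fin_two] using ⟨hm, hm'⟩
  · simpa [Fin.forall_fin_two] using ⟨hxy, hyz⟩

lemma IsNonwandering.chainRecurrent (hy : IsNonwandering f y) (hf : Continuous f) :
    ChainRecurrent f y := by
  intro ε hε
  have hW : {z | dist (f y) (f z) < ε / 2 ∧ dist z y < ε / 2} ∈ 𝓝 y := by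
    have hfy : ∀ᶠ z in 𝓝 y, dist (f y) (f z) < ε / 2 := by
      simp_rw [dist_comm (f y)]
      exact (hf.tendsto y).eventually (Metric.ball_mem_nhds (f y) (half_pos hε))
    exact hfy.and (Metric.ball_mem_nhds y (half_pos hε))
  obtain ⟨z, ⟨hfz, -⟩, m, hm, -, hmz⟩ := hy _ hW
  obtain rfl | hm1 : m = 1 ∨ 1 < m := by lia
  · refine isEpsChain_of_dist_iterate_lt one_pos ((dist_triangle (f y) (f z) y).trans_lt ?_)
    rw [Function.iterate_one] at hmz
    linarith
  · refine isEpsChain_of_dist_iterate_lt_of_dist_iterate_lt (y := f z) (m' := m - 1) one_pos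
      (hfz.trans (half_lt_self hε)) (by lia) ?_
    rw [← Function.iterate_succ_apply, Nat.succ_eq_add_one, Nat.sub_add_cancel hm]
    exact hmz.trans (half_lt_self hε)

lemma chainRecurrent_of_mapClusterPt_of_leftInverse (hfg : Function.LeftInverse f g)
    (hforward : MapClusterPt y atTop (fun k : ℕ => f^[k] x))
    (hbackward : MapClusterPt y atTop (fun k : ℕ => g^[k] x)) : ChainRecurrent f x := by
  intro ε hε
  have hball := Metric.ball_mem_nhds y (half_pos hε)
  obtain ⟨k, hk, hky⟩ := frequently_atTop.1 (hforward.frequently hball) 1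
  obtain ⟨l, hl, hly⟩ := frequently_atTop.1 (hbackward.frequently hball) 1
  refine isEpsChain_of_dist_iterate_lt_of_dist_iterate_lt (y := g^[l] x) hk ?_ hl ?_
  · calc dist (f^[k] x) (g^[l] x) ≤ dist (f^[k] x) y + dist (g^[l] x) y :=
          dist_triangle_right _ _ _
      _ < ε / 2 + ε / 2 := add_lt_add hky hly
      _ = ε := add_halves ε
  · rwa [hfg.iterate l x, dist_self]

lemma subset_singleton_of_chainRecurrentSet_inter_subset {K : Set X} {a : X} (hf : Continuous f)
    (hfg : Function.LeftInverse f g) (hK : IsCompact K) (hfK : Set.MapsTo f K K)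
    (hgK : Set.MapsTo g K K) (hR : chainRecurrentSet f ∩ K ⊆ {a}) : K ⊆ {a} := by
  intro x hx
  obtain ⟨y, hyK, hy⟩ := hK.exists_mapClusterPt_of_frequently (f := fun k => f^[k] x)
    (Frequently.of_forall (f := atTop) fun k => hfK.iterate k hx)
  obtain ⟨z, hzK, hz⟩ := hK.exists_mapClusterPt_of_frequently (f := fun k => g^[k] x)
    (Frequently.of_forall (f := atTop) fun k => hgK.iterate k hx)
  obtain rfl : y = a :=
    hR ⟨(isNonwandering_of_mapClusterPt_iterate hy).chainRecurrent hf, hyK⟩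
  obtain rfl : z = y :=
    hR ⟨((isNonwandering_of_mapClusterPt_iterate hz).of_leftInverse hfg).chainRecurrent hf, hzK⟩
  exact hR ⟨chainRecurrent_of_mapClusterPt_of_leftInverse hfg hy hz, hx⟩

lemma chainRecurrentSet_iterate_subset (f : X → X) (hm : 0 < m) :
    chainRecurrentSet f^[m] ⊆ chainRecurrentSet f := by
  intro x hx ε hε
  obtain ⟨k, hk, c, e, hc0, hclast, he, hc⟩ := hx ε hε
  refine ⟨k, hk, c, fun i => m * e i, hc0, hclast, fun i => Nat.mul_pos hm (he i), fun i => ?_⟩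
  rw [Function.iterate_mul]
  exact hc i

end ChainRecurrence

lemma modelMap_surjective (n i : ℕ) {δu δs : ℝ} (hu : δu ≠ 0) (hs : δs ≠ 0) :
    Function.Surjective (modelMap n i δu δs) := by
  intro z
  refine ⟨WithLp.toLp 2 fun j : Fin n =>
    if (j : ℕ) < i then (if (j : ℕ) = 0 then 2 * δu else 2)⁻¹ * z j
    else (if (j : ℕ) = i then δs / 2 else 1 / 2)⁻¹ * z j, ?_⟩
  ext j
  simp only [modelMap]
  split_ifs <;> field_simp

lemma preimage_eq_self_of_surjective_conj {X Y : Type*} {F : X → X} (hF : Function.Injective F)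
    {a : Y → Y} (ha : Function.Surjective a) {U : Set X} (h : U ≃ Y)
    (hFa : ∀ x : U, F x = h.symm (a (h x))) : F ⁻¹' U = U := by
  ext x
  refine ⟨fun hx => ?_, fun hx => ?_⟩
  · obtain ⟨w, hw⟩ := ha (h ⟨F x, hx⟩)
    have hFw : F (h.symm w) = F x := by
      rw [hFa, h.apply_symm_apply, hw, h.symm_apply_apply]
    rw [← hF hFw]
    exact (h.symm w).2
  · rw [Set.mem_preimage, hFa ⟨x, hx⟩]
    exact Subtype.prop _

lemma TopHyperbolic.exists_invariant_chart {M : Type*} [MetricSpace M] {n i : ℕ} {f : M ≃ₜ M}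
    {p : M} (hp : TopHyperbolic n f p i) :
    ∃ m : ℕ, 0 < m ∧ ∃ U : Set M, IsOpen U ∧ p ∈ U ∧ f^[m] ⁻¹' U = U ∧
      Nonempty (U ≃ₜ EuclideanSpace ℝ (Fin n)) := by
  obtain ⟨m, hm, -, -, δu, δs, hu, hs, U, hU, hpU, h, hh⟩ := hp
  have hu0 : δu ≠ 0 := by rcases hu with rfl | rfl <;> norm_num
  have hs0 : δs ≠ 0 := by rcases hs with rfl | rfl <;> norm_num
  exact ⟨m, hm, U, hU, hpU, preimage_eq_self_of_surjective_conj (f.injective.iterate m)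
    (modelMap_surjective n i hu0 hs0) h.toEquiv hh, ⟨h⟩⟩

section SpheresAsCompactifications

variable {X V : Type*} [TopologicalSpace X] [CompactSpace X]

lemma ne_univ_of_homeomorph_normedSpace [Nontrivial X] (𝕜 : Type*) [NontriviallyNormedField 𝕜]
    [NormedAddCommGroup V] [NormedSpace 𝕜 V] {U : Set X} (h : U ≃ₜ V) : U ≠ Set.univ := by
  rintro rfl
  let e : X ≃ₜ V := (Homeomorph.Set.univ X).symm.trans h
  have : Nontrivial V := e.symm.toEquiv.nontrivial
  have : NoncompactSpace V := NormedSpace.noncompactSpace 𝕜 V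
  exact not_compactSpace_iff.2 this e.compactSpace

lemma nonempty_homeomorph_sphere_of_compl_singleton_homeomorph [T2Space X]
    [AddCommGroup V] [Module ℝ V] [FiniteDimensional ℝ V] [TopologicalSpace V]
    [IsTopologicalAddGroup V] [ContinuousSMul ℝ V] [T2Space V] {ι : Type*} [Fintype ι]
    (hι : Module.finrank ℝ V + 1 = Fintype.card ι) {x : X} (h : ({x}ᶜ : Set X) ≃ₜ V) :
    Nonempty (X ≃ₜ Metric.sphere (0 : EuclideanSpace ℝ ι) 1) := by
  have hemb : IsEmbedding (Subtype.val ∘ h.symm : V → X) :=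
    IsEmbedding.subtypeVal.comp h.symm.isEmbedding
  have hrange : Set.range (Subtype.val ∘ h.symm : V → X) = {x}ᶜ := by
    rw [h.symm.surjective.range_comp, Subtype.range_coe]
  exact ⟨(OnePoint.equivOfIsEmbeddingOfRangeEq x _ hemb hrange).symm.trans
    (onePointEquivSphereOfFinrankEq hι)⟩

end SpheresAsCompactifications

theorem north_south_dynamics_sphere_general {n i : ℕ} {M : Type*} [MetricSpace M] [CompactSpace M]
    {f : M ≃ₜ M} {α ω : M} (hαω : α ≠ ω) (hR : chainRecurrentSet (⇑f) ⊆ {α, ω})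
    (hω : TopHyperbolic n f ω i) :
    Nonempty (M ≃ₜ (Metric.sphere (0 : EuclideanSpace ℝ (Fin (n + 1))) 1)) := by
  have : Nontrivial M := nontrivial_of_ne α ω hαω
  obtain ⟨m, hm, U, hUopen, hωU, hUinv, ⟨h⟩⟩ := hω.exists_invariant_chart
  have hinv : Function.LeftInverse f^[m] f.symm^[m] :=
    Function.LeftInverse.iterate f.apply_symm_apply m
  have hforward : Set.MapsTo f^[m] Uᶜ Uᶜ := fun x hx hfx => hx (hUinv.subset hfx)
  have hbackward : Set.MapsTo f.symm^[m] Uᶜ Uᶜ := fun x hx hfx => hx <| by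
    simpa only [Set.mem_preimage, hinv x] using hUinv.symm.subset hfx
  have hRU : chainRecurrentSet f^[m] ∩ Uᶜ ⊆ {α} := by
    rintro x ⟨hxR, hxU⟩
    exact (hR (chainRecurrentSet_iterate_subset f hm hxR)).resolve_right
      (ne_of_mem_of_not_mem hωU hxU).symm
  have hUα : Uᶜ ⊆ {α} := subset_singleton_of_chainRecurrentSet_inter_subset
    (f.continuous.iterate m) hinv hUopen.isClosed_compl.isCompact hforward hbackward hRU
  have hUc : Uᶜ = {α} := (Set.nonempty_compl.2
    (ne_univ_of_homeomorph_normedSpace ℝ h)).subset_singleton_iff.1 hUα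
  obtain rfl : U = {α}ᶜ := by rw [← hUc, compl_compl]
  exact nonempty_homeomorph_sphere_of_compl_singleton_homeomorph (by simp) h

/-- a closed connected topological `n`-manifold (`n ≥ 2`) admitting a
regular homeomorphism whose chain recurrent set consists of exactly one source fixed
point `α` (Morse index `n`) and one sink fixed point `ω` (Morse index `0`) is
homeomorphic to the `n`-sphere `Sⁿ`. -/
theorem north_south_dynamics_sphere {n : ℕ} (hn : 2 ≤ n) {M : Type*}
    [MetricSpace M] [CompactSpace M] [ConnectedSpace M] [Nonempty M]
    (hM : IsChartedEuclidean n M)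
    (f : M ≃ₜ M) (hf : RegularHomeo n f)
    (α ω : M) (hαω : α ≠ ω)
    (hR : chainRecurrentSet (⇑f) = {α, ω})
    (hαfix : f α = α) (hωfix : f ω = ω)
    (hα : TopHyperbolic n f α n) (hω : TopHyperbolic n f ω 0) :
    Nonempty (M ≃ₜ (Metric.sphere (0 : EuclideanSpace ℝ (Fin (n + 1))) 1)) := by
  exact north_south_dynamics_sphere_general hαω hR.subset hω
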